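/- arXiv:2110.12092 — 5 statements merged into one kernel-verified Lean document; each statement's English description precedes it below -/
import Mathlib

section
/- Let E be a separable Banach space, p ∈ (1, ∞) and p* = p/(p−1). Let (x_n)_{n≥1} be a sequence in E that is weakly p-summable and (y_n)_{n≥1} a sequence in E* that is *-weakly p*-summable. Then ((x_n, y_n))_{n≥1} is a besselian pair of E; that is, there exists a constant A > 0 such that ∑_{n=1}^∞ |y_n(x)| · |y(x_n)| ≤ A‖x‖‖y‖ for all x ∈ E and y ∈ E*. -/
open Filter Topology

/-!
By Hölder's inequality, `∑ |y n v| |w (x n)|` converges for all `v : E` and `w : E*`. The uniform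
constant then comes from the uniform boundedness principle alone, applied first in `w` and then in
`v` to the `ℓ¹`-valued bilinear maps that send `(v, w)` to a finite truncation of the sequence
`(y n v * w (x n))`: the `ℓ¹` norm of such a truncation is a partial sum of the series.
-/

section UniformBoundedness

variable {𝕜 ι E F G : Type*} [NontriviallyNormedField 𝕜]
  [SeminormedAddCommGroup E] [NormedSpace 𝕜 E] [CompleteSpace E]
  [SeminormedAddCommGroup F] [NormedSpace 𝕜 F] [CompleteSpace F]

theorem banach_steinhaus₂ [SeminormedAddCommGroup G] [NormedSpace 𝕜 G]
    {T : ι → E →L[𝕜] F →L[𝕜] G} (h : ∀ v w, ∃ C, ∀ i, ‖T i v w‖ ≤ C) :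
    ∃ C, ∀ i, ‖T i‖ ≤ C :=
  banach_steinhaus fun v => banach_steinhaus (h v)

theorem exists_tsum_norm_apply₂_le [NormedAddCommGroup G] [NormedSpace 𝕜 G]
    {B : ι → E →L[𝕜] F →L[𝕜] G} (hB : ∀ v w, Summable fun i => ‖B i v w‖) :
    ∃ C > (0 : ℝ), ∀ v w, ∑' i, ‖B i v w‖ ≤ C * ‖v‖ * ‖w‖ := by
  classical
  let T (s : Finset ι) : E →L[𝕜] F →L[𝕜] lp (fun _ : ι => G) 1 :=
    ∑ i ∈ s, (lp.singleContinuousLinearMap 𝕜 (fun _ => G) 1 i).postcomp F ∘L B i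
  have norm_T (s : Finset ι) (v : E) (w : F) : ‖T s v w‖ = ∑ i ∈ s, ‖B i v w‖ := by
    simpa [T] using lp.norm_sum_single (E := fun _ => G) (p := 1) (by simp) (fun i => B i v w) s
  obtain ⟨C, hC⟩ : ∃ C, ∀ s, ‖T s‖ ≤ C := banach_steinhaus₂ fun v w =>
    ⟨∑' i, ‖B i v w‖, fun s =>
      (norm_T s v w).trans_le ((hB v w).sum_le_tsum s fun _ _ => norm_nonneg _)⟩
  refine ⟨max C 1, by positivity, fun v w => (hB v w).tsum_le_of_sum_le fun s => ?_⟩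
  calc ∑ i ∈ s, ‖B i v w‖ = ‖T s v w‖ := (norm_T s v w).symm
    _ ≤ ‖T s‖ * ‖v‖ * ‖w‖ := (T s).le_opNorm₂ v w
    _ ≤ max C 1 * ‖v‖ * ‖w‖ := by
      gcongr
      exact (hC s).trans (le_max_left C 1)

end UniformBoundedness

section Besselian

variable {𝕜 ι E : Type*} [NontriviallyNormedField 𝕜]
  [SeminormedAddCommGroup E] [NormedSpace 𝕜 E]

/-- The pair of families `((x i, y i))` in `E × E*` is besselian. Summability is part of the
definition because `∑'` of a divergent series is `0`. -/
def IsBesselian (x : ι → E) (y : ι → StrongDual 𝕜 E) : Prop :=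
  ∃ A > (0 : ℝ), ∀ (v : E) (w : StrongDual 𝕜 E),
    Summable (fun i => ‖y i v‖ * ‖w (x i)‖) ∧ ∑' i, ‖y i v‖ * ‖w (x i)‖ ≤ A * ‖v‖ * ‖w‖

variable [CompleteSpace 𝕜] [CompleteSpace E] {x : ι → E} {y : ι → StrongDual 𝕜 E}

theorem isBesselian_of_summable
    (h : ∀ (v : E) (w : StrongDual 𝕜 E), Summable fun i => ‖y i v‖ * ‖w (x i)‖) :
    IsBesselian x y := by
  let B (i : ι) : E →L[𝕜] StrongDual 𝕜 E →L[𝕜] 𝕜 :=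
    (y i).smulRight (NormedSpace.inclusionInDoubleDual 𝕜 E (x i))
  have norm_B (i : ι) (v : E) (w : StrongDual 𝕜 E) : ‖B i v w‖ = ‖y i v‖ * ‖w (x i)‖ := by
    simp [B]
  obtain ⟨A, hA, hle⟩ := exists_tsum_norm_apply₂_le (B := B) (by simpa only [norm_B] using h)
  simp only [norm_B] at hle
  exact ⟨A, hA, fun v w => ⟨h v w, hle v w⟩⟩

theorem weakly_summable_pair_is_besselian_general {p q : ℝ} (hpq : p.HolderConjugate q)
    (hx : ∀ f : StrongDual 𝕜 E, Summable fun i => ‖f (x i)‖ ^ p)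
    (hy : ∀ v : E, Summable fun i => ‖y i v‖ ^ q) :
    IsBesselian x y :=
  isBesselian_of_summable fun v w =>
    Real.summable_mul_of_Lp_Lq_of_nonneg hpq.symm (fun _ => norm_nonneg _) (fun _ => norm_nonneg _)
      (hy v) (hx w)

end Besselian

/-- If `(x n)` is weakly `p`-summable in a separable Banach space `E` and `(y n)` is
*-weakly `p*`-summable in `E*` (with `p* = p/(p-1)`), then `((x n, y n))` is a
besselian pair of `E`. -/
theorem weakly_summable_pair_is_besselian
    {E : Type*} [NormedAddCommGroup E] [NormedSpace ℝ E] [CompleteSpace E]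
    [TopologicalSpace.SeparableSpace E]
    (p : ℝ) (hp : 1 < p) (x : ℕ → E) (y : ℕ → E →L[ℝ] ℝ)
    (hx : ∀ f : E →L[ℝ] ℝ, Summable fun n => |f (x n)| ^ p)
    (hy : ∀ v : E, Summable fun n => |y n v| ^ (p / (p - 1))) :
    ∃ A > (0 : ℝ), ∀ (v : E) (w : E →L[ℝ] ℝ),
      Summable (fun n => |y n v| * |w (x n)|) ∧
      ∑' n, |y n v| * |w (x n)| ≤ A * ‖v‖ * ‖w‖ :=
  weakly_summable_pair_is_besselian_general (.conjExponent hp) hx hy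
end

section
/- If a separable Banach space E has a Schauder frame ((a_n, b_n))_{n≥1}, then E has the approximation property: for every compact subset K of E and every ε > 0 there exists a finite-rank bounded linear operator T : E → E such that ‖T(x) − x‖ ≤ ε for all x ∈ K. -/
open Filter Topology

/-- `((a n, b n))` is a Schauder frame of `E`: the partial sums `∑_{j<n} b j x • a j`
converge in norm to `x` for every `x ∈ E`. -/
def IsSchauderFrame {E : Type*} [NormedAddCommGroup E] [NormedSpace ℝ E]
    (a : ℕ → E) (b : ℕ → E →L[ℝ] ℝ) : Prop :=
  ∀ x : E, Tendsto (fun n => ∑ j ∈ Finset.range n, b j x • a j) atTop (𝓝 x)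

/-!
The partial-sum operators of a Schauder frame have finite rank and converge pointwise to the
identity. By the uniform boundedness principle they are equicontinuous, and an equicontinuous
family that converges pointwise converges uniformly on compact sets. So a partial-sum operator of
high enough index approximates the identity on `K`.
-/

section UniformConvergence

theorem tendstoUniformlyOn_of_equicontinuousOn {ι X α : Type*} [TopologicalSpace X]
    [UniformSpace α] {F : ι → X → α} {f : X → α} {l : Filter ι} {K : Set X}
    (hK : IsCompact K) (hF : EquicontinuousOn F K)
    (h : ∀ x ∈ K, Tendsto (F · x) l (𝓝 (f x))) : TendstoUniformlyOn F f l K := by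
  have h_uniform : Tendsto (UniformOnFun.ofFun {K} ∘ F) l (𝓝 (UniformOnFun.ofFun {K} f)) := by
    rw [EquicontinuousOn.tendsto_uniformOnFun_iff_pi' (by simpa using hK) (by simpa using hF),
      tendsto_pi_nhds]
    rintro ⟨x, hx⟩
    exact h x (by simpa using hx)
  exact UniformOnFun.tendsto_iff_tendstoUniformlyOn.mp h_uniform K rfl

variable {𝕜₁ 𝕜₂ E F : Type*} [NontriviallyNormedField 𝕜₁] [NontriviallyNormedField 𝕜₂]
  {σ : 𝕜₁ →+* 𝕜₂} [RingHomIsometric σ]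
  [AddCommGroup E] [Module 𝕜₁ E] [UniformSpace E] [IsUniformAddGroup E] [ContinuousSMul 𝕜₁ E]
  [BarrelledSpace 𝕜₁ E]
  [AddCommGroup F] [Module 𝕜₂ F] [UniformSpace F] [IsUniformAddGroup F] [ContinuousSMul 𝕜₂ F]
  [PolynormableSpace 𝕜₂ F]
  {u : ℕ → E →SL[σ] F} {f : E → F}

theorem uniformEquicontinuous_of_tendsto (h : ∀ x, Tendsto (u · x) atTop (𝓝 (f x))) :
    UniformEquicontinuous fun n => ⇑(u n) :=
  PolynormableSpace.banach_steinhaus fun x => (h x).isVonNBounded_range 𝕜₂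

theorem tendstoUniformlyOn_of_tendsto_of_isCompact {K : Set E} (hK : IsCompact K)
    (h : ∀ x, Tendsto (u · x) atTop (𝓝 (f x))) :
    TendstoUniformlyOn (fun n => ⇑(u n)) f atTop K :=
  tendstoUniformlyOn_of_equicontinuousOn hK
    ((uniformEquicontinuous_of_tendsto h).equicontinuous.equicontinuousOn K) fun x _ => h x

end UniformConvergence

theorem range_sum_smulRight_le_span {R M N ι : Type*} [CommSemiring R] [AddCommMonoid M]
    [AddCommMonoid N] [Module R M] [Module R N] (s : Finset ι) (f : ι → M →ₗ[R] R) (v : ι → N) :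
    LinearMap.range (∑ i ∈ s, (f i).smulRight (v i)) ≤ Submodule.span R (v '' s) := by
  rintro _ ⟨x, rfl⟩
  simp only [LinearMap.sum_apply, LinearMap.smulRight_apply]
  exact Submodule.sum_smul_mem _ _ fun i hi =>
    Submodule.subset_span (Set.mem_image_of_mem v hi)

section PartialSum

variable {𝕜 E F : Type*} [Field 𝕜] [TopologicalSpace 𝕜] [AddCommGroup E] [Module 𝕜 E]
  [TopologicalSpace E] [AddCommGroup F] [Module 𝕜 F] [TopologicalSpace F] [ContinuousAdd F]
  [ContinuousSMul 𝕜 F]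

/-- The partial-sum operator `x ↦ ∑_{j<n} b j x • a j` attached to vectors `a j` and functionals
`b j`. For a Schauder frame these operators are the finite-rank approximants of the identity. -/
noncomputable def partialSumCLM (a : ℕ → F) (b : ℕ → E →L[𝕜] 𝕜) (n : ℕ) : E →L[𝕜] F :=
  ∑ j ∈ Finset.range n, (b j).smulRight (a j)

theorem partialSumCLM_apply (a : ℕ → F) (b : ℕ → E →L[𝕜] 𝕜) (n : ℕ) (x : E) :
    partialSumCLM a b n x = ∑ j ∈ Finset.range n, b j x • a j := by
  simp [partialSumCLM]

theorem finiteDimensional_range_partialSumCLM (a : ℕ → F) (b : ℕ → E →L[𝕜] 𝕜) (n : ℕ) :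
    FiniteDimensional 𝕜 (LinearMap.range (partialSumCLM a b n : E →ₗ[𝕜] F)) := by
  have h_span : FiniteDimensional 𝕜 (Submodule.span 𝕜 (a '' (Finset.range n : Set ℕ))) :=
    FiniteDimensional.span_of_finite 𝕜 ((Finset.finite_toSet _).image a)
  have h_coe : (partialSumCLM a b n : E →ₗ[𝕜] F) =
      ∑ j ∈ Finset.range n, (b j : E →ₗ[𝕜] 𝕜).smulRight (a j) := by
    ext x
    simp [partialSumCLM_apply]
  rw [h_coe]
  exact Submodule.finiteDimensional_of_le (range_sum_smulRight_le_span _ _ _)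

end PartialSum

theorem IsSchauderFrame.tendstoUniformlyOn_partialSumCLM
    {E : Type*} [NormedAddCommGroup E] [NormedSpace ℝ E] [BarrelledSpace ℝ E]
    {a : ℕ → E} {b : ℕ → E →L[ℝ] ℝ} (h : IsSchauderFrame a b) {K : Set E} (hK : IsCompact K) :
    TendstoUniformlyOn (fun n => ⇑(partialSumCLM a b n)) id atTop K :=
  tendstoUniformlyOn_of_tendsto_of_isCompact hK fun x => by
    simpa only [partialSumCLM_apply, id] using h x

theorem schauderFrame_implies_approximation_property_general
    {E : Type*} [NormedAddCommGroup E] [NormedSpace ℝ E] [BarrelledSpace ℝ E]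
    (a : ℕ → E) (b : ℕ → E →L[ℝ] ℝ) (h : IsSchauderFrame a b) :
    ∀ K : Set E, IsCompact K → ∀ ε > (0 : ℝ),
      ∃ T : E →L[ℝ] E,
        FiniteDimensional ℝ (LinearMap.range (T : E →ₗ[ℝ] E)) ∧
        ∀ x ∈ K, ‖T x - x‖ ≤ ε := by
  intro K hK ε hε
  have h_uniform := Metric.tendstoUniformlyOn_iff.mp (h.tendstoUniformlyOn_partialSumCLM hK) ε hε
  obtain ⟨n, hn⟩ := h_uniform.exists
  refine ⟨partialSumCLM a b n, finiteDimensional_range_partialSumCLM a b n, fun x hx => ?_⟩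
  rw [← dist_eq_norm, dist_comm]
  exact (hn x hx).le

/-- If a separable Banach space `E` has a Schauder frame, then `E` has the
approximation property. -/
theorem schauderFrame_implies_approximation_property
    {E : Type*} [NormedAddCommGroup E] [NormedSpace ℝ E] [CompleteSpace E]
    [TopologicalSpace.SeparableSpace E]
    (a : ℕ → E) (b : ℕ → E →L[ℝ] ℝ) (h : IsSchauderFrame a b) :
    ∀ K : Set E, IsCompact K → ∀ ε > (0 : ℝ),
      ∃ T : E →L[ℝ] E,
        FiniteDimensional ℝ (LinearMap.range (T : E →ₗ[ℝ] E)) ∧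
        ∀ x ∈ K, ‖T x - x‖ ≤ ε :=
  schauderFrame_implies_approximation_property_general a b h
end

section
/- Let E be a separable Banach space and ((a_n, b_n))_{n≥1} a Schauder frame of E. If ∑_{n=1}^∞ ‖a_n‖·‖b_n‖ < ∞, then E is finite dimensional. -/
open Filter Topology

/-!
If the first finitely many coefficients `b j x` vanish, then `x` is the sum of the tail of its
expansion, so `‖x‖ ≤ (∑ ‖a j‖ ‖b j‖) ‖x‖`, the sum running over that tail. Once the tail sum is
below `1` this forces `x = 0`: finitely many of the functionals `b j` separate the points of `E`
and embed it into a finite power of the scalar field.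
-/

section Seminormed

variable {𝕜 E F ι : Type*} [NontriviallyNormedField 𝕜]
  [SeminormedAddCommGroup E] [NormedSpace 𝕜 E] [SeminormedAddCommGroup F] [NormedSpace 𝕜 F]

theorem norm_apply_smul_le (f : E →L[𝕜] 𝕜) (v : F) (x : E) :
    ‖f x • v‖ ≤ ‖v‖ * ‖f‖ * ‖x‖ :=
  calc ‖f x • v‖ = ‖v‖ * ‖f x‖ := by rw [norm_smul, mul_comm]
    _ ≤ ‖v‖ * (‖f‖ * ‖x‖) := by gcongr; exact f.le_opNorm x
    _ = ‖v‖ * ‖f‖ * ‖x‖ := (mul_assoc _ _ _).symm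

theorem norm_le_tsum_compl_mul_norm_of_hasSum {a : ι → F} {b : ι → E →L[𝕜] 𝕜}
    (hsum : Summable fun i => ‖a i‖ * ‖b i‖) {x : E} {y : F}
    (hy : HasSum (fun i => b i x • a i) y) {s : Finset ι} (hs : ∀ i ∈ s, b i x = 0) :
    ‖y‖ ≤ (∑' i : {i // i ∉ s}, ‖a i‖ * ‖b i‖) * ‖x‖ := by
  have tail : HasSum (fun i : {i // i ∉ s} => b i x • a i) y := by
    refine (hasSum_subtype_iff_of_support_subset (s := {i | i ∉ s}) fun i hi his => hi ?_).mpr hy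
    simp [hs i his]
  exact tail.norm_le_of_bounded ((hsum.subtype _).hasSum.mul_right ‖x‖)
    fun i => norm_apply_smul_le (b i) (a i) x

theorem hasSum_apply_smul_of_tendsto_sum_range {a : ℕ → F} {b : ℕ → E →L[𝕜] 𝕜}
    (hsum : Summable fun n => ‖a n‖ * ‖b n‖) {x : E} {y : F}
    (hy : Tendsto (fun n => ∑ j ∈ Finset.range n, b j x • a j) atTop (𝓝 y)) :
    HasSum (fun n => b n x • a n) y :=
  (hasSum_iff_tendsto_nat_of_summable_norm <|
    (hsum.mul_right ‖x‖).of_nonneg_of_le (fun _ => norm_nonneg _)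
      fun n => norm_apply_smul_le (b n) (a n) x).mpr hy

end Seminormed

section Normed

variable {𝕜 E ι : Type*} [NontriviallyNormedField 𝕜] [NormedAddCommGroup E] [NormedSpace 𝕜 E]

theorem exists_finset_forall_apply_eq_zero_imp_eq_zero {a : ι → E} {b : ι → E →L[𝕜] 𝕜}
    (h : ∀ x, HasSum (fun i => b i x • a i) x) (hsum : Summable fun i => ‖a i‖ * ‖b i‖) :
    ∃ s : Finset ι, ∀ x, (∀ i ∈ s, b i x = 0) → x = 0 := by
  obtain ⟨s, tail_lt_one⟩ : ∃ s : Finset ι, ∑' i : {i // i ∉ s}, ‖a i‖ * ‖b i‖ < 1 :=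
    ((tendsto_tsum_compl_atTop_zero fun i => ‖a i‖ * ‖b i‖).eventually_lt_const
      zero_lt_one).exists
  refine ⟨s, fun x hs => by_contra fun hx => ?_⟩
  have norm_le := norm_le_tsum_compl_mul_norm_of_hasSum hsum (h x) hs
  exact norm_le.not_gt (mul_lt_of_lt_one_left (norm_pos_iff.mpr hx) tail_lt_one)

theorem finiteDimensional_of_hasSum_apply_smul {a : ι → E} {b : ι → E →L[𝕜] 𝕜}
    (h : ∀ x, HasSum (fun i => b i x • a i) x) (hsum : Summable fun i => ‖a i‖ * ‖b i‖) :
    FiniteDimensional 𝕜 E := by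
  obtain ⟨s, separating⟩ := exists_finset_forall_apply_eq_zero_imp_eq_zero h hsum
  let coordinates : E →ₗ[𝕜] s → 𝕜 := LinearMap.pi fun i => (b i : E →ₗ[𝕜] 𝕜)
  refine .of_injective coordinates <| (injective_iff_map_eq_zero coordinates).mpr fun x hx => ?_
  exact separating x fun i hi => congrFun hx ⟨i, hi⟩

theorem schauderFrame_summable_norms_implies_finiteDimensional_general
    (a : ℕ → E) (b : ℕ → E →L[𝕜] 𝕜)
    (h : ∀ x, Tendsto (fun n => ∑ j ∈ Finset.range n, b j x • a j) atTop (𝓝 x))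
    (hsum : Summable fun n => ‖a n‖ * ‖b n‖) :
    FiniteDimensional 𝕜 E :=
  finiteDimensional_of_hasSum_apply_smul
    (fun x => hasSum_apply_smul_of_tendsto_sum_range hsum (h x)) hsum

end Normed

/-- If a separable Banach space `E` has a Schauder frame `((a n, b n))` with
`∑ ‖a n‖ ‖b n‖ < ∞`, then `E` is finite dimensional. -/
theorem schauderFrame_summable_norms_implies_finiteDimensional
    {E : Type*} [NormedAddCommGroup E] [NormedSpace ℝ E] [CompleteSpace E]
    [TopologicalSpace.SeparableSpace E]
    (a : ℕ → E) (b : ℕ → E →L[ℝ] ℝ) (h : IsSchauderFrame a b)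
    (hsum : Summable fun n => ‖a n‖ * ‖b n‖) :
    FiniteDimensional ℝ E :=
  schauderFrame_summable_norms_implies_finiteDimensional_general a b h hsum
end

section
/- Let E be a weakly sequentially complete separable Banach space and ((a_n, b_n))_{n≥1} a besselian pair of E. Then for every x ∈ E the series ∑_n b_n(x) a_n is unconditionally convergent in E (i.e., the family (b_n(x) a_n)_{n≥1} has a sum in the sense of unordered/net summability). -/
open Filter Topology

/-- `E` is weakly sequentially complete: every weakly Cauchy sequence is weakly
convergent. -/
def WeaklySequentiallyComplete (E : Type*) [NormedAddCommGroup E] [NormedSpace ℝ E] : Prop :=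
  ∀ x : ℕ → E,
    (∀ y : E →L[ℝ] ℝ, ∃ l : ℝ, Tendsto (fun n => y (x n)) atTop (𝓝 l)) →
    ∃ x₀ : E, ∀ y : E →L[ℝ] ℝ, Tendsto (fun n => y (x n)) atTop (𝓝 (y x₀))

/-- `((a n, b n))` is a besselian pair of `E`: there is `A > 0` such that
`∑ |b n x| |y (a n)| ≤ A ‖x‖ ‖y‖` for all `x ∈ E`, `y ∈ E*`. -/
def IsBesselianPair {E : Type*} [NormedAddCommGroup E] [NormedSpace ℝ E]
    (a : ℕ → E) (b : ℕ → E →L[ℝ] ℝ) : Prop :=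
  ∃ A > (0 : ℝ), ∀ (x : E) (y : E →L[ℝ] ℝ),
    Summable (fun n => |b n x| * |y (a n)|) ∧
    ∑' n, |b n x| * |y (a n)| ≤ A * ‖x‖ * ‖y‖

/-!
Pairing `∑ b n x • a n` with a functional gives an absolutely convergent series, so weak sequential
completeness supplies a weak sum `X s` for each subseries `s ⊆ ℕ`. By the Orlicz–Pettis theorem,
the series is then unconditionally convergent in norm. To see this, regard `X` as a weakly
continuous map on the Cantor space. Its values lie in the closed span of the terms, which is
covered by countably many small balls; these are weakly closed, so by Baire's theorem `X` has small
oscillation on some cylinder. Since `X t = X (s ∪ t) - X (s \ t)`, this makes `X t` small for every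
`t` that avoids a suitable finite set of indices.
-/

section WeakTopology

variable {ι 𝕜 E T : Type*} [RCLike 𝕜] [NormedAddCommGroup E] [NormedSpace 𝕜 E]

theorem isClosed_toWeakSpace_image [NormedSpace ℝ E] [IsScalarTower ℝ 𝕜 E] {s : Set E}
    (hs : Convex ℝ s) (hs' : IsClosed s) : IsClosed (toWeakSpace 𝕜 E '' s) := by
  rw [← hs'.closure_eq, hs.toWeakSpace_closure 𝕜]
  exact isClosed_closure

theorem isClosed_toWeakSpace_image_closedBall (x : E) (r : ℝ) :
    IsClosed (toWeakSpace 𝕜 E '' Metric.closedBall x r) := by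
  let _ : NormedSpace ℝ E := .restrictScalars ℝ 𝕜 E
  have : IsScalarTower ℝ 𝕜 E := .restrictScalars ℝ 𝕜 E
  exact isClosed_toWeakSpace_image (convex_closedBall x r) Metric.isClosed_closedBall

theorem isClosed_toWeakSpace_image_submodule {M : Submodule 𝕜 E} (hM : IsClosed (M : Set E)) :
    IsClosed (toWeakSpace 𝕜 E '' (M : Set E)) := by
  let _ : NormedSpace ℝ E := .restrictScalars ℝ 𝕜 E
  have : IsScalarTower ℝ 𝕜 E := .restrictScalars ℝ 𝕜 E
  exact isClosed_toWeakSpace_image (M.restrictScalars ℝ).convex hM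

theorem tendsto_toWeakSpace_iff {l : Filter T} {f : T → E} {x : E} :
    Tendsto (fun t => toWeakSpace 𝕜 E (f t)) l (𝓝 (toWeakSpace 𝕜 E x)) ↔
      ∀ y : StrongDual 𝕜 E, Tendsto (fun t => y (f t)) l (𝓝 (y x)) :=
  WeakBilin.tendsto_iff_forall_eval_tendsto _ fun _ _ h =>
    (SeparatingDual.eq_iff_forall_dual_eq (R := 𝕜)).2 (DFunLike.congr_fun h)

theorem hasSum_toWeakSpace_iff {c : ι → E} {x : E} :
    HasSum (fun i => toWeakSpace 𝕜 E (c i)) (toWeakSpace 𝕜 E x) ↔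
      ∀ y : StrongDual 𝕜 E, HasSum (fun i => y (c i)) (y x) := by
  simp only [HasSum, ← map_sum]
  exact tendsto_toWeakSpace_iff

theorem mem_of_hasSum_toWeakSpace {M : Submodule 𝕜 E} (hM : IsClosed (M : Set E)) {c : ι → E}
    (hc : ∀ i, c i ∈ M) {x : E}
    (hx : HasSum (fun i => toWeakSpace 𝕜 E (c i)) (toWeakSpace 𝕜 E x)) : x ∈ M := by
  have hmem : toWeakSpace 𝕜 E x ∈ toWeakSpace 𝕜 E '' (M : Set E) :=
    (isClosed_toWeakSpace_image_submodule hM).mem_of_tendsto hx <| .of_forall fun s =>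
      ⟨∑ i ∈ s, c i, M.sum_mem fun i _ => hc i, map_sum _ _ _⟩
  exact (toWeakSpace 𝕜 E).injective.mem_set_image.1 hmem

theorem exists_eventually_dist_le_of_continuous_toWeakSpace [TopologicalSpace T] [BaireSpace T]
    [Nonempty T] {f : T → E} (hf : Continuous fun t => toWeakSpace 𝕜 E (f t))
    (hsep : TopologicalSpace.IsSeparable (Set.range f)) {ε : ℝ} (hε : 0 < ε) :
    ∃ t₀, ∀ᶠ t in 𝓝 t₀, dist (f t) (f t₀) ≤ ε := by
  obtain ⟨D, hD, hfD⟩ := hsep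
  have : Countable D := hD.to_subtype
  have hclosed (d : D) : IsClosed (f ⁻¹' Metric.closedBall (d : E) (ε / 2)) := by
    convert (isClosed_toWeakSpace_image_closedBall (𝕜 := 𝕜) (d : E) (ε / 2)).preimage hf using 1
    ext t
    exact (toWeakSpace 𝕜 E).injective.mem_set_image.symm
  have hcover : ⋃ d : D, f ⁻¹' Metric.closedBall (d : E) (ε / 2) = Set.univ := by
    refine Set.eq_univ_of_forall fun t => Set.mem_iUnion.2 ?_
    obtain ⟨d, hd, hdist⟩ := Metric.mem_closure_iff.1 (hfD ⟨t, rfl⟩) (ε / 2) (half_pos hε)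
    exact ⟨⟨d, hd⟩, hdist.le⟩
  obtain ⟨d, t₀, ht₀⟩ := nonempty_interior_of_iUnion_of_closed hclosed hcover
  refine ⟨t₀, ?_⟩
  filter_upwards [mem_interior_iff_mem_nhds.1 ht₀] with t ht
  calc dist (f t) (f t₀) ≤ dist (f t) d + dist (f t₀) d := dist_triangle_right _ _ _
    _ ≤ ε / 2 + ε / 2 := add_le_add ht (interior_subset (s := f ⁻¹' _) ht₀)
    _ = ε := add_halves ε

end WeakTopology

theorem exists_finset_forall_eqOn_of_eventually_nhds {ι : Type*} {π : ι → Type*}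
    [∀ i, TopologicalSpace (π i)] {A : ∀ i, π i} {p : (∀ i, π i) → Prop}
    (h : ∀ᶠ B in 𝓝 A, p B) : ∃ F : Finset ι, ∀ B, (∀ i ∈ F, B i = A i) → p B := by
  rw [nhds_pi] at h
  obtain ⟨F, u, hu, hFu⟩ := Filter.mem_pi'.1 h
  exact ⟨F, fun B hB => hFu fun i hi => hB i hi ▸ mem_of_mem_nhds (hu i)⟩

section OrliczPettis

variable {ι 𝕜 E : Type*} [RCLike 𝕜] [NormedAddCommGroup E] [NormedSpace 𝕜 E]
  {c : ι → E} {X : Set ι → E}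

variable (𝕜) in
/-- Weak subseries convergence of `∑ c i`: for every set `s` of indices, `X s` is the sum of
`∑_{i ∈ s} c i` in the weak topology. The sums are recorded as a function `X`, so that they can be
studied as a set function with values in `E`. -/
def HasWeakSubseriesSums (c : ι → E) (X : Set ι → E) : Prop :=
  ∀ s : Set ι, HasSum (fun i : s => toWeakSpace 𝕜 E (c i)) (toWeakSpace 𝕜 E (X s))

namespace HasWeakSubseriesSums

-- Indexing by `ι → Bool` avoids `Set ι = (ι → Prop)`, where `Prop` has the Sierpiński topology.
theorem continuous_toWeakSpace (hX : HasWeakSubseriesSums 𝕜 c X) :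
    Continuous fun A : ι → Bool => toWeakSpace 𝕜 E (X {i | A i}) := by
  refine WeakBilin.continuous_of_continuous_eval _ fun y => ?_
  have hy (s : Set ι) : HasSum (s.indicator fun i => y (c i)) (y (X s)) :=
    hasSum_subtype_iff_indicator.1 (hasSum_toWeakSpace_iff.1 (hX s) y)
  have hsum : Summable fun i => ‖y (c i)‖ := by
    simpa using (hy Set.univ).summable.norm
  have heval : (fun A : ι → Bool => y (X {i | A i})) =
      fun A => ∑' i, {i | A i}.indicator (fun i => y (c i)) i :=
    funext fun A => (hy _).tsum_eq.symm
  change Continuous fun A : ι → Bool => y (X {i | A i})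
  rw [heval]
  refine continuous_tsum (fun i => ?_) hsum fun i A => norm_indicator_le_norm_self _ _
  have hterm : Continuous fun b : Bool => if b then y (c i) else 0 :=
    continuous_of_discreteTopology
  simpa only [Set.indicator_apply, Set.mem_ofPred_eq] using! hterm.comp (continuous_apply i)

theorem isSeparable_range [Countable ι] (hX : HasWeakSubseriesSums 𝕜 c X) :
    TopologicalSpace.IsSeparable (Set.range X) := by
  have hspan : TopologicalSpace.IsSeparable
      ((Submodule.span 𝕜 (Set.range c)).topologicalClosure : Set E) :=
    ((Set.countable_range c).isSeparable.span (R := 𝕜)).closure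
  refine hspan.mono ?_
  rintro _ ⟨s, rfl⟩
  refine mem_of_hasSum_toWeakSpace (Submodule.isClosed_topologicalClosure _) (fun i => ?_) (hX s)
  exact Submodule.le_topologicalClosure _ (Submodule.subset_span (Set.mem_range_self _))

theorem union_eq_add (hX : HasWeakSubseriesSums 𝕜 c X) {s t : Set ι} (hst : Disjoint s t) :
    X (s ∪ t) = X s + X t := by
  apply (toWeakSpace 𝕜 E).injective
  rw [map_add]
  exact (hX (s ∪ t)).unique (HasSum.add_disjoint (f := fun i => toWeakSpace 𝕜 E (c i)) hst
    (hX s) (hX t))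

theorem finset_eq_sum (hX : HasWeakSubseriesSums 𝕜 c X) (s : Finset ι) :
    X s = ∑ i ∈ s, c i := by
  apply (toWeakSpace 𝕜 E).injective
  rw [map_sum]
  exact (hX s).unique (s.hasSum fun i => toWeakSpace 𝕜 E (c i))

theorem exists_finset_forall_disjoint_norm_le [Countable ι] (hX : HasWeakSubseriesSums 𝕜 c X)
    {ε : ℝ} (hε : 0 < ε) : ∃ F : Finset ι, ∀ t : Set ι, Disjoint ↑F t → ‖X t‖ ≤ ε := by
  classical
  obtain ⟨A, hA⟩ := exists_eventually_dist_le_of_continuous_toWeakSpace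
    hX.continuous_toWeakSpace (hX.isSeparable_range.mono (Set.range_comp_subset_range _ X))
    (half_pos hε)
  obtain ⟨F, hF⟩ := exists_finset_forall_eqOn_of_eventually_nhds hA
  set s : Set ι := {i | A i}
  have hdist (u : Set ι) (hu : ∀ i ∈ F, i ∈ u ↔ i ∈ s) : dist (X u) (X s) ≤ ε / 2 := by
    simpa using hF (fun i => decide (i ∈ u)) fun i hi => by simp [hu i hi, s]
  refine ⟨F, fun t ht => ?_⟩
  have hnot (i : ι) (hi : i ∈ F) : i ∉ t := Set.disjoint_left.1 ht hi
  have hadd : X (s ∪ t) = X (s \ t) + X t := by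
    rw [← Set.sdiff_union_self, hX.union_eq_add Set.disjoint_sdiff_left]
  calc ‖X t‖ = dist (X (s ∪ t)) (X (s \ t)) := by rw [hadd, dist_self_add_left]
    _ ≤ dist (X (s ∪ t)) (X s) + dist (X (s \ t)) (X s) := dist_triangle_right _ _ _
    _ ≤ ε / 2 + ε / 2 := add_le_add (hdist _ fun i hi => by simp [hnot i hi])
        (hdist _ fun i hi => by simp [hnot i hi])
    _ = ε := add_halves ε

theorem hasSum [Countable ι] (hX : HasWeakSubseriesSums 𝕜 c X) : HasSum c (X Set.univ) := by
  classical
  rw [HasSum, SummationFilter.unconditional_filter, Metric.tendsto_atTop]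
  intro ε hε
  obtain ⟨F, hF⟩ := hX.exists_finset_forall_disjoint_norm_le (half_pos hε)
  refine ⟨F, fun s hs => ?_⟩
  have hadd : X Set.univ = ∑ i ∈ s, c i + X (↑s)ᶜ := by
    rw [← Set.union_compl_self (s : Set ι), hX.union_eq_add disjoint_compl_right,
      hX.finset_eq_sum]
  calc dist (∑ i ∈ s, c i) (X Set.univ) = ‖X (↑s)ᶜ‖ := by rw [hadd, dist_self_add_right]
    _ ≤ ε / 2 := hF _ (disjoint_compl_right.mono_left (Finset.coe_subset.2 hs))
    _ < ε := half_lt_self hε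

end HasWeakSubseriesSums

/-- The **Orlicz–Pettis theorem**. -/
theorem summable_of_forall_summable_subtype_toWeakSpace [Countable ι]
    (hc : ∀ s : Set ι, Summable fun i : s => toWeakSpace 𝕜 E (c i)) : Summable c := by
  choose X hX using hc
  have hX' : HasWeakSubseriesSums 𝕜 c fun s => (toWeakSpace 𝕜 E).symm (X s) := fun s => by
    simpa only [LinearEquiv.apply_symm_apply] using hX s
  exact hX'.hasSum.summable

end OrliczPettis

namespace WeaklySequentiallyComplete

variable {E : Type*} [NormedAddCommGroup E] [NormedSpace ℝ E] {c : ℕ → E}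

theorem summable_toWeakSpace (hE : WeaklySequentiallyComplete E)
    (hc : ∀ y : StrongDual ℝ E, Summable fun n => y (c n)) :
    Summable fun n => toWeakSpace ℝ E (c n) := by
  have hpartial (y : StrongDual ℝ E) :
      Tendsto (fun n => y (∑ i ∈ Finset.range n, c i)) atTop (𝓝 (∑' i, y (c i))) := by
    simpa only [map_sum] using (hc y).hasSum.tendsto_sum_nat
  obtain ⟨x, hx⟩ := hE _ fun y => ⟨_, hpartial y⟩
  refine ⟨toWeakSpace ℝ E x, hasSum_toWeakSpace_iff.2 fun y => ?_⟩
  rw [tendsto_nhds_unique (hx y) (hpartial y)]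
  exact (hc y).hasSum

theorem summable (hE : WeaklySequentiallyComplete E)
    (hc : ∀ y : StrongDual ℝ E, Summable fun n => y (c n)) : Summable c := by
  refine summable_of_forall_summable_subtype_toWeakSpace (𝕜 := ℝ) fun s => ?_
  have hs : Summable fun n => toWeakSpace ℝ E (s.indicator c n) :=
    hE.summable_toWeakSpace fun y => by
      change Summable (y ∘ s.indicator c)
      rw [← Set.indicator_comp_of_zero (map_zero y)]
      exact (hc y).indicator s
  refine (summable_subtype_iff_indicator (f := fun n => toWeakSpace ℝ E (c n))).2 ?_
  exact Set.indicator_comp_of_zero (f := c) (map_zero (toWeakSpace ℝ E)) ▸ hs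

end WeaklySequentiallyComplete

theorem besselianPair_unconditionally_convergent_general
    {E : Type*} [NormedAddCommGroup E] [NormedSpace ℝ E]
    (hE : WeaklySequentiallyComplete E)
    (a : ℕ → E) (b : ℕ → E →L[ℝ] ℝ) (h : IsBesselianPair a b) :
    ∀ x : E, Summable fun n => b n x • a n := by
  obtain ⟨A, -, hA⟩ := h
  refine fun x => hE.summable fun y => .of_abs ?_
  simpa only [map_smul, smul_eq_mul, abs_mul] using (hA x y).1

/-- If `E` is a weakly sequentially complete separable Banach space and `((a n, b n))`
is a besselian pair of `E`, then for every `x ∈ E` the series `∑ b n x • a n` is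
unconditionally convergent (i.e. the family is summable). -/
theorem besselianPair_unconditionally_convergent
    {E : Type*} [NormedAddCommGroup E] [NormedSpace ℝ E] [CompleteSpace E]
    [TopologicalSpace.SeparableSpace E]
    (hE : WeaklySequentiallyComplete E)
    (a : ℕ → E) (b : ℕ → E →L[ℝ] ℝ) (h : IsBesselianPair a b) :
    ∀ x : E, Summable fun n => b n x • a n :=
  besselianPair_unconditionally_convergent_general hE a b h
end

section
/- Let H be a separable real Hilbert space and (x_n)_{n≥1} a Hilbert frame of H, i.e., there are constants α, β > 0 with α‖x‖² ≤ ∑_{n=1}^∞ |⟨x_n, x⟩|² ≤ β‖x‖² for all x ∈ H. Then there exists a sequence (y_n)_{n≥1} in H such that ((x_n, ⟨y_n, ·⟩))_{n≥1} is a besselian Schauder frame of H: for every x ∈ H the partial sums ∑_{j=1}^n ⟨y_j, x⟩ x_j converge in norm to x, and there is a constant C > 0 with ∑_{n=1}^∞ |⟨y_n, x⟩| · |⟨x_n, y⟩| ≤ C‖x‖‖y‖ for all x, y ∈ H. -/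
open Filter Topology
open scoped RealInnerProductSpace

/-!
Let `T v = (⟪x i, v⟫)ᵢ` be the analysis operator into `ℓ²` and `S = T† T` the frame operator. The
lower frame bound makes `S` invertible, and we take the canonical dual family `y i = S⁻¹ (x i)`.
Since `S⁻¹` is symmetric, `v = T† (T (S⁻¹ v)) = ∑ ⟪x i, S⁻¹ v⟫ x i = ∑ ⟪y i, v⟫ x i`. With
`u = S⁻¹ v`, the inequalities `α ‖u‖² ≤ ‖T u‖² = ⟪v, u⟫ ≤ ‖v‖ ‖u‖` give `‖u‖ ≤ α⁻¹ ‖v‖`, hence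
`∑ |⟪y i, v⟫|² = ‖T u‖² ≤ α⁻¹ ‖v‖²`. Cauchy–Schwarz in `ℓ²` then gives the besselian estimate.
-/

open scoped InnerProductSpace InnerProduct

theorem l2_norm_sq_eq_tsum {ι : Type*} {E : ι → Type*} [∀ i, NormedAddCommGroup (E i)]
    (f : lp E 2) : ‖f‖ ^ 2 = ∑' i, ‖f i‖ ^ 2 := by
  simpa using lp.norm_rpow_eq_tsum (p := 2) (by norm_num) f

section Frames

variable {ι 𝕜 H : Type*} [RCLike 𝕜] [NormedAddCommGroup H] [InnerProductSpace 𝕜 H]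

variable (𝕜) in
/-- A Bessel family with bound `β`: `∑ |⟪x i, v⟫|² ≤ β ‖v‖²` for every `v`. Summability is a
separate field because the sum of a non-summable family is `0` by convention. -/
structure IsBesselFamily (x : ι → H) (β : ℝ) : Prop where
  summable_norm_inner_sq (v : H) : Summable fun i ↦ ‖⟪x i, v⟫_𝕜‖ ^ 2
  tsum_norm_inner_sq_le (v : H) : ∑' i, ‖⟪x i, v⟫_𝕜‖ ^ 2 ≤ β * ‖v‖ ^ 2

variable (𝕜) in
/-- A Hilbert frame with bounds `α > 0` and `β`, over an arbitrary index type. -/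
structure IsHilbertFrame (x : ι → H) (α β : ℝ) : Prop extends IsBesselFamily 𝕜 x β where
  lower_pos : 0 < α
  le_tsum_norm_inner_sq (v : H) : α * ‖v‖ ^ 2 ≤ ∑' i, ‖⟪x i, v⟫_𝕜‖ ^ 2

namespace IsBesselFamily

variable {x y : ι → H} {β γ : ℝ}

theorem memℓp_inner (hx : IsBesselFamily 𝕜 x β) (v : H) : Memℓp (fun i ↦ ⟪x i, v⟫_𝕜) 2 :=
  memℓp_gen (by simpa using hx.summable_norm_inner_sq v)

/-- The analysis operator `v ↦ (⟪x i, v⟫)ᵢ` of a Bessel family, as a linear map into `ℓ²`; its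
continuous version is `IsBesselFamily.analysis`. -/
def analysisLinear (hx : IsBesselFamily 𝕜 x β) : H →ₗ[𝕜] lp (fun _ : ι ↦ 𝕜) 2 where
  toFun v := ⟨fun i ↦ ⟪x i, v⟫_𝕜, hx.memℓp_inner v⟩
  map_add' v w := by ext i; exact inner_add_right _ _ _
  map_smul' c v := by ext i; exact inner_smul_right _ _ _

theorem norm_analysisLinear_le (hx : IsBesselFamily 𝕜 x β) (v : H) :
    ‖hx.analysisLinear v‖ ≤ √β * ‖v‖ :=
  calc ‖hx.analysisLinear v‖ ≤ √(β * ‖v‖ ^ 2) := by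
        apply Real.le_sqrt_of_sq_le
        rw [l2_norm_sq_eq_tsum]
        exact hx.tsum_norm_inner_sq_le v
    _ = √β * ‖v‖ := by rw [Real.sqrt_mul' _ (sq_nonneg _), Real.sqrt_sq (norm_nonneg v)]

/-- The analysis operator `v ↦ (⟪x i, v⟫)ᵢ` of a Bessel family, as a bounded operator into `ℓ²`. -/
noncomputable def analysis (hx : IsBesselFamily 𝕜 x β) : H →L[𝕜] lp (fun _ : ι ↦ 𝕜) 2 :=
  hx.analysisLinear.mkContinuous √β hx.norm_analysisLinear_le

@[simp]
theorem analysis_apply (hx : IsBesselFamily 𝕜 x β) (v : H) (i : ι) :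
    hx.analysis v i = ⟪x i, v⟫_𝕜 :=
  rfl

theorem norm_analysis_sq (hx : IsBesselFamily 𝕜 x β) (v : H) :
    ‖hx.analysis v‖ ^ 2 = ∑' i, ‖⟪x i, v⟫_𝕜‖ ^ 2 :=
  l2_norm_sq_eq_tsum (hx.analysis v)

theorem norm_analysis_le (hx : IsBesselFamily 𝕜 x β) (v : H) : ‖hx.analysis v‖ ≤ √β * ‖v‖ :=
  hx.norm_analysisLinear_le v

theorem summable_and_tsum_norm_inner_mul_norm_inner_le (hy : IsBesselFamily 𝕜 y γ)
    (hx : IsBesselFamily 𝕜 x β) (v w : H) :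
    (Summable fun i ↦ ‖⟪y i, v⟫_𝕜‖ * ‖⟪x i, w⟫_𝕜‖) ∧
      ∑' i, ‖⟪y i, v⟫_𝕜‖ * ‖⟪x i, w⟫_𝕜‖ ≤ √γ * √β * ‖v‖ * ‖w‖ := by
  obtain ⟨hsum, hle⟩ := lp.tsum_mul_le_mul_norm (p := 2) (q := 2)
    (by simpa using Real.HolderConjugate.two_two) (hy.analysis v) (hx.analysis w)
  refine ⟨hsum, hle.trans ?_⟩
  calc ‖hy.analysis v‖ * ‖hx.analysis w‖ ≤ (√γ * ‖v‖) * (√β * ‖w‖) := by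
        gcongr
        exacts [hy.norm_analysis_le v, hx.norm_analysis_le w]
    _ = √γ * √β * ‖v‖ * ‖w‖ := by ring

variable [CompleteSpace H]

theorem adjoint_analysis_single [DecidableEq ι] (hx : IsBesselFamily 𝕜 x β) (i : ι) (a : 𝕜) :
    (hx.analysis†) (lp.single 2 i a) = a • x i := by
  refine ext_inner_right 𝕜 fun v ↦ ?_
  rw [ContinuousLinearMap.adjoint_inner_left, lp.inner_single_left, analysis_apply,
    inner_smul_left, RCLike.inner_apply']

theorem hasSum_adjoint_analysis (hx : IsBesselFamily 𝕜 x β) (f : lp (fun _ : ι ↦ 𝕜) 2) :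
    HasSum (fun i ↦ f i • x i) ((hx.analysis†) f) := by
  classical
  simpa only [adjoint_analysis_single] using
    (lp.hasSum_single (by simp) f).mapL (hx.analysis†)

/-- The frame operator `v ↦ ∑ ⟪x i, v⟫ x i`, encoded as `T† T` with `T` the analysis operator. -/
noncomputable def frameOperator (hx : IsBesselFamily 𝕜 x β) : H →L[𝕜] H :=
  hx.analysis† ∘L hx.analysis

theorem hasSum_frameOperator (hx : IsBesselFamily 𝕜 x β) (v : H) :
    HasSum (fun i ↦ ⟪x i, v⟫_𝕜 • x i) (hx.frameOperator v) :=
  hx.hasSum_adjoint_analysis (hx.analysis v)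

theorem isSymmetric_frameOperator (hx : IsBesselFamily 𝕜 x β) :
    (hx.frameOperator : H →ₗ[𝕜] H).IsSymmetric :=
  (ContinuousLinearMap.isPositive_adjoint_comp_self hx.analysis).isSymmetric

theorem inner_frameOperator_self (hx : IsBesselFamily 𝕜 x β) (v : H) :
    ⟪hx.frameOperator v, v⟫_𝕜 = (‖hx.analysis v‖ : 𝕜) ^ 2 :=
  calc ⟪hx.frameOperator v, v⟫_𝕜 = ⟪hx.analysis v, hx.analysis v⟫_𝕜 :=
        hx.analysis.adjoint_inner_left v (hx.analysis v)
    _ = (‖hx.analysis v‖ : 𝕜) ^ 2 := inner_self_eq_norm_sq_to_K (hx.analysis v)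

theorem norm_analysis_sq_le_norm_frameOperator_mul_norm (hx : IsBesselFamily 𝕜 x β) (v : H) :
    ‖hx.analysis v‖ ^ 2 ≤ ‖hx.frameOperator v‖ * ‖v‖ := by
  simpa [inner_frameOperator_self] using norm_inner_le_norm (𝕜 := 𝕜) (hx.frameOperator v) v

end IsBesselFamily

namespace IsHilbertFrame

variable {x : ι → H} {α β : ℝ}

theorem le_norm_analysis_sq (hx : IsHilbertFrame 𝕜 x α β) (v : H) :
    α * ‖v‖ ^ 2 ≤ ‖hx.analysis v‖ ^ 2 :=
  (hx.le_tsum_norm_inner_sq v).trans_eq (hx.norm_analysis_sq v).symm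

variable [CompleteSpace H]

theorem isUnit_frameOperator (hx : IsHilbertFrame 𝕜 x α β) : IsUnit hx.frameOperator := by
  refine hx.frameOperator.isUnit_of_forall_le_norm_inner_map
    (Real.toNNReal_pos.mpr hx.lower_pos) fun v ↦ ?_
  simpa [hx.inner_frameOperator_self, hx.lower_pos.le, mul_comm (‖v‖ ^ 2)] using
    hx.le_norm_analysis_sq v

/-- The frame operator of a Hilbert frame as a continuous linear equivalence, giving access to its
inverse. -/
noncomputable def frameEquiv (hx : IsHilbertFrame 𝕜 x α β) : H ≃L[𝕜] H :=
  ContinuousLinearEquiv.unitsEquiv 𝕜 H hx.isUnit_frameOperator.unit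

@[simp]
theorem frameOperator_frameEquiv_symm (hx : IsHilbertFrame 𝕜 x α β) (v : H) :
    hx.frameOperator (hx.frameEquiv.symm v) = v :=
  hx.frameEquiv.apply_symm_apply v

theorem norm_frameEquiv_symm_le (hx : IsHilbertFrame 𝕜 x α β) (v : H) :
    ‖hx.frameEquiv.symm v‖ ≤ α⁻¹ * ‖v‖ := by
  set u := hx.frameEquiv.symm v
  have h : α * ‖u‖ ^ 2 ≤ ‖v‖ * ‖u‖ := by
    simpa [u] using (hx.le_norm_analysis_sq u).trans
      (hx.norm_analysis_sq_le_norm_frameOperator_mul_norm u)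
  rw [le_inv_mul_iff₀ hx.lower_pos]
  rcases (norm_nonneg u).eq_or_lt with hu | hu
  · simp [← hu]
  · exact le_of_mul_le_mul_right (by linarith) hu

/-- The canonical dual family `S⁻¹ (x i)` of a Hilbert frame with frame operator `S`; its inner
products are the coefficients that reconstruct a vector from `x`. -/
noncomputable def dual (hx : IsHilbertFrame 𝕜 x α β) (i : ι) : H :=
  hx.frameEquiv.symm (x i)

theorem inner_dual_left (hx : IsHilbertFrame 𝕜 x α β) (i : ι) (v : H) :
    ⟪hx.dual i, v⟫_𝕜 = ⟪x i, hx.frameEquiv.symm v⟫_𝕜 :=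
  LinearMap.IsSymmetric.toLinearMap_symm (T := hx.frameEquiv.toLinearEquiv)
    hx.isSymmetric_frameOperator (x i) v

theorem hasSum_inner_dual_smul (hx : IsHilbertFrame 𝕜 x α β) (v : H) :
    HasSum (fun i ↦ ⟪hx.dual i, v⟫_𝕜 • x i) v := by
  simpa [inner_dual_left] using hx.hasSum_frameOperator (hx.frameEquiv.symm v)

theorem isBesselFamily_dual (hx : IsHilbertFrame 𝕜 x α β) :
    IsBesselFamily 𝕜 hx.dual α⁻¹ where
  summable_norm_inner_sq v := by
    simpa only [inner_dual_left] using hx.summable_norm_inner_sq (hx.frameEquiv.symm v)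
  tsum_norm_inner_sq_le v := by
    simp only [inner_dual_left, ← hx.norm_analysis_sq]
    calc ‖hx.analysis (hx.frameEquiv.symm v)‖ ^ 2 ≤ ‖v‖ * ‖hx.frameEquiv.symm v‖ := by
          simpa using hx.norm_analysis_sq_le_norm_frameOperator_mul_norm (hx.frameEquiv.symm v)
      _ ≤ ‖v‖ * (α⁻¹ * ‖v‖) := by gcongr; exact hx.norm_frameEquiv_symm_le v
      _ = α⁻¹ * ‖v‖ ^ 2 := by ring

end IsHilbertFrame

theorem hilbertFrame_gives_besselianSchauderFrame_general [CompleteSpace H] {x : ι → H} {α β : ℝ}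
    (hx : IsHilbertFrame 𝕜 x α β) :
    ∃ y : ι → H, (∀ v : H, HasSum (fun i ↦ ⟪y i, v⟫_𝕜 • x i) v) ∧
      ∀ v w : H, (Summable fun i ↦ ‖⟪y i, v⟫_𝕜‖ * ‖⟪x i, w⟫_𝕜‖) ∧
        ∑' i, ‖⟪y i, v⟫_𝕜‖ * ‖⟪x i, w⟫_𝕜‖ ≤ √α⁻¹ * √β * ‖v‖ * ‖w‖ :=
  ⟨hx.dual, hx.hasSum_inner_dual_smul,
    hx.isBesselFamily_dual.summable_and_tsum_norm_inner_mul_norm_inner_le hx.toIsBesselFamily⟩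

end Frames

/-- If `(x n)` is a Hilbert frame of a separable real Hilbert space `H`, then there is
a sequence `(y n)` in `H` such that `((x n, ⟪y n, ·⟫))` is a besselian Schauder frame
of `H`. -/
theorem hilbertFrame_gives_besselianSchauderFrame
    {H : Type*} [NormedAddCommGroup H] [InnerProductSpace ℝ H] [CompleteSpace H]
    [TopologicalSpace.SeparableSpace H]
    (x : ℕ → H) (α β : ℝ) (hα : 0 < α) (hβ : 0 < β)
    (hframe : ∀ v : H, Summable (fun n => |⟪x n, v⟫| ^ 2) ∧
      α * ‖v‖ ^ 2 ≤ ∑' n, |⟪x n, v⟫| ^ 2 ∧ ∑' n, |⟪x n, v⟫| ^ 2 ≤ β * ‖v‖ ^ 2) :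
    ∃ y : ℕ → H,
      (∀ v : H, Tendsto (fun n => ∑ j ∈ Finset.range n, ⟪y j, v⟫ • x j) atTop (𝓝 v)) ∧
      ∃ C > (0 : ℝ), ∀ v w : H,
        Summable (fun n => |⟪y n, v⟫| * |⟪x n, w⟫|) ∧
        ∑' n, |⟪y n, v⟫| * |⟪x n, w⟫| ≤ C * ‖v‖ * ‖w‖ := by
  have hx : IsHilbertFrame ℝ x α β :=
    { lower_pos := hα
      summable_norm_inner_sq := fun v ↦ (hframe v).1
      le_tsum_norm_inner_sq := fun v ↦ (hframe v).2.1
      tsum_norm_inner_sq_le := fun v ↦ (hframe v).2.2 }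
  obtain ⟨y, hsum, hbessel⟩ := hilbertFrame_gives_besselianSchauderFrame_general hx
  exact ⟨y, fun v ↦ (hsum v).tendsto_sum_nat, √α⁻¹ * √β, by positivity, hbessel⟩
end
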